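/- Let q be a prime power, p a monic irreducible polynomial of degree k over F_q with companion matrix P, m ≥ 1 and n = mk, and let r ∈ {0,…,k−1}. Let U, V ∈ F_q^{k×n} be basis matrices of codewords of the Desarguesian spread S_q(m,k,P) (block form with blocks in F_q[P]). Let A, A' ∈ F_q^{k×k} be matrices of rank k − r, and let S ⊆ {1,…,n} be a set of at most k − r − 1 column indices. If AU and A'V agree in every column outside S, then rowsp(U) = rowsp(V). (That is, the Desarguesian spread can uniquely decode any r row deletions together with k−r−1 column erasures in the column erasure channel.) -/

import Mathlib

/-!
The columns of `U`, `V` split into `m` blocks `B j`, `C j` of size `k`. All of them lie in `F[P]`,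
which is a field: `p` annihilates `P` (`aeval_companionMatrix`), so irreducibility of `p` makes
every nonzero element of `F[P]` invertible (`isUnit_of_mem_range_aeval`).

Agreement of `A * U` and `A' * V` outside `S` says that `A * B j - A' * C j` vanishes outside the
columns of `S` in block `j`, hence has rank at most their number `s j`, where
`s i + s j ≤ |S| < k - r` for `i ≠ j`. If the leading identity blocks of `U` and `V` sit at
different positions, the earlier of them gives `A` or `A'` rank less than `k - r`, which is absurd.
If both sit at `i`, then `A - A'` has rank at most `s i`, and for every other block
`A * (B j - C j) = (A * B j - A' * C j) - (A - A') * C j` has rank less than `k - r = rank A`.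
So `B j - C j` is not invertible and `B j = C j`; thus even `U = V`.
-/


open Matrix Polynomial

noncomputable section

/-- The companion matrix of a (monic) polynomial `p` of degree `k`:
entries `P (j+1) j = 1` on the subdiagonal, last column `(-p₀, …, -p_{k-1})ᵀ`. -/
def companionMatrix {F : Type*} [Field F] {k : ℕ} (p : Polynomial F) :
    Matrix (Fin k) (Fin k) F :=
  Matrix.of fun i j =>
    if (j : ℕ) = k - 1 then -p.coeff (i : ℕ)
    else if (i : ℕ) = (j : ℕ) + 1 then 1 else 0

/-- `F_q[P] = { Σ_{i<k} vᵢ Pⁱ : vᵢ ∈ F_q }`. -/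
def matAlg {F : Type*} [Field F] {k : ℕ} (P : Matrix (Fin k) (Fin k) F) :
    Set (Matrix (Fin k) (Fin k) F) :=
  { A | ∃ v : Fin k → F, A = ∑ i : Fin k, v i • P ^ (i : ℕ) }

/-- The row space of a matrix: the span of its rows. -/
def rowSpace {F : Type*} [Field F] {ι n : Type*} (M : Matrix ι n F) :
    Submodule F (n → F) :=
  Submodule.span F (Set.range fun i => M i)

/-- `U` is a (reduced row echelon form) basis matrix of a codeword of the
Desarguesian spread `S_q(m,k,P)`, i.e. `U = (0 | … | 0 | I_k | B_{i+1} | … | B_m)`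
with all blocks `B_j ∈ F_q[P]`. -/
def IsSpreadMat {F : Type*} [Field F] {k m : ℕ} (P : Matrix (Fin k) (Fin k) F)
    (U : Matrix (Fin k) (Fin m × Fin k) F) : Prop :=
  ∃ i : Fin m, ∃ B : Fin m → Matrix (Fin k) (Fin k) F,
    (∀ j, j < i → B j = 0) ∧ B i = 1 ∧ (∀ j, i < j → B j ∈ matAlg P) ∧
    U = Matrix.of fun r jc => B jc.1 r jc.2

/-- The Desarguesian spread `S_q(m,k,P)` as a set of subspaces of `F^{mk}`. -/
def desSpread {F : Type*} [Field F] {k m : ℕ} (P : Matrix (Fin k) (Fin k) F) :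
    Set (Submodule F (Fin m × Fin k → F)) :=
  { W | ∃ U : Matrix (Fin k) (Fin m × Fin k) F, IsSpreadMat P U ∧ W = rowSpace U }

/-- Rank is subadditive. -/
lemma rank_sub_le_add {F : Type*} [Field F] {k : ℕ} (M N : Matrix (Fin k) (Fin k) F) :
    (M - N).rank ≤ M.rank + N.rank := by
  unfold Matrix.rank
  refine le_trans (Submodule.finrank_mono ?_)
    (Submodule.finrank_add_le_finrank_add_finrank _ _)
  rintro _ ⟨x, rfl⟩
  rw [Matrix.mulVecLin_apply, Matrix.sub_mulVec]
  exact Submodule.sub_mem _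
    (Submodule.mem_sup_left ⟨x, rfl⟩) (Submodule.mem_sup_right ⟨x, rfl⟩)

lemma rank_le_card_of_cols {F : Type*} [Field F] {k : ℕ} (M : Matrix (Fin k) (Fin k) F)
    (T : Finset (Fin k)) (h : ∀ c ∉ T, ∀ i, M i c = 0) : M.rank ≤ T.card := by
  rw [← Matrix.rank_transpose]
  apply Matrix.rank_le_card_of_support_subset
  rw [Function.support_subset_iff']
  intro c hc
  funext i
  exact h c hc i

/-- On the standard basis, `P` acts as the shift `e_j ↦ e_{j+1}`, so `P ^ j` sends `e₀` to `e_j`. -/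
lemma companionMatrix_pow_mulVec {F : Type*} [Field F] {k : ℕ} (p : F[X]) (hk : 0 < k) (j : ℕ)
    (hj : j < k) :
    (companionMatrix (k := k) p ^ j) *ᵥ Pi.single ⟨0, hk⟩ 1 = Pi.single ⟨j, hj⟩ 1 := by
  induction j with
  | zero => rw [pow_zero, Matrix.one_mulVec]
  | succ j ih =>
    rw [pow_succ', ← Matrix.mulVec_mulVec, ih (by omega), Matrix.mulVec_single_one]
    ext i
    have hne : j ≠ k - 1 := by omega
    simp [companionMatrix, Matrix.col_apply, hne, Pi.single_apply, Fin.ext_iff]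

/-- `p` annihilates its companion matrix: `p(P)` kills `e₀` because the last column of `P`
expresses `P ^ k e₀` through the lower powers, and it then kills every `e_j = P ^ j e₀`
because it commutes with `P`. -/
lemma aeval_companionMatrix {F : Type*} [Field F] {k : ℕ} (p : F[X]) (hmonic : p.Monic)
    (hdeg : p.natDegree = k) (hk : 0 < k) :
    aeval (companionMatrix (k := k) p) p = 0 := by
  have h0 : (aeval (companionMatrix (k := k) p) p) *ᵥ Pi.single ⟨0, hk⟩ 1 = 0 := by
    have hlast : (companionMatrix (k := k) p ^ k) *ᵥ Pi.single ⟨0, hk⟩ 1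
        = fun i : Fin k => -p.coeff i := by
      obtain ⟨n, rfl⟩ : ∃ n, k = n + 1 := ⟨k - 1, by omega⟩
      rw [pow_succ', ← Matrix.mulVec_mulVec,
        companionMatrix_pow_mulVec p hk n (by omega), Matrix.mulVec_single_one]
      ext i
      simp [companionMatrix, Matrix.col_apply]
    have hlead : p.coeff k = 1 := by rw [← hdeg]; exact hmonic.coeff_natDegree
    rw [aeval_eq_sum_range, hdeg, Finset.sum_range_succ, Matrix.add_mulVec, Matrix.smul_mulVec,
      hlast, hlead, one_smul, Finset.sum_range, Matrix.sum_mulVec]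
    simp_rw [Matrix.smul_mulVec, companionMatrix_pow_mulVec p hk _ (Fin.is_lt _)]
    ext i
    simp [Finset.sum_apply, Pi.single_apply]
  apply Matrix.ext_of_mulVec_single
  intro j
  rw [← companionMatrix_pow_mulVec p hk j j.2, Matrix.mulVec_mulVec, Matrix.zero_mulVec]
  have hcomm : aeval (companionMatrix (k := k) p) p * companionMatrix (k := k) p ^ (j : ℕ)
      = companionMatrix (k := k) p ^ (j : ℕ) * aeval (companionMatrix (k := k) p) p := by
    have h := congrArg (aeval (companionMatrix (k := k) p)) (mul_comm p (X ^ (j : ℕ)))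
    simpa using h
  rw [hcomm, ← Matrix.mulVec_mulVec, h0, Matrix.mulVec_zero]

/-- If an irreducible `p` annihilates `P`, then `F[P]` is a field: an `f` with `f(P) ≠ 0` is
coprime to `p`, and evaluating a Bézout identity at `P` inverts `f(P)`. -/
lemma isUnit_of_mem_range_aeval {F : Type*} [Field F] {k : ℕ} (p : F[X]) (hirr : Irreducible p)
    {P : Matrix (Fin k) (Fin k) F} (hP : aeval P p = 0) {D : Matrix (Fin k) (Fin k) F}
    (hD : D ∈ (aeval (R := F) P).range) (hD0 : D ≠ 0) : IsUnit D := by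
  obtain ⟨f, rfl⟩ := hD
  have hndvd : ¬ p ∣ f := by
    rintro ⟨g, rfl⟩
    exact hD0 (by simp [hP])
  obtain ⟨a, b, hab⟩ := hirr.coprime_iff_not_dvd.2 hndvd
  have h := congrArg (aeval P) hab
  simp only [map_add, map_mul, hP, mul_zero, zero_add, map_one] at h
  exact ⟨⟨_, aeval P b, mul_eq_one_comm.1 h, h⟩, rfl⟩

lemma mem_range_aeval_of_mem_matAlg {F : Type*} [Field F] {k : ℕ} {P D : Matrix (Fin k) (Fin k) F}
    (hD : D ∈ matAlg P) : D ∈ (aeval (R := F) P).range := by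
  obtain ⟨v, rfl⟩ := hD
  exact ⟨∑ i : Fin k, C (v i) * X ^ (i : ℕ), by simp [Algebra.smul_def]⟩

/-- In the column erasure channel with deletions, the
Desarguesian spread `S_q(m,k,P)` uniquely decodes any `r` row deletions together
with `k-r-1` column erasures: if `U, V` are basis matrices of spread codewords,
`A, A'` have rank `k-r`, and `A·U` and `A'·V` agree in every column outside a
set `S` of at most `k-r-1` columns, then `rowsp(U) = rowsp(V)`. -/
theorem desSpread_CEC_deletion_correction (F : Type*) [Field F] (k m r : ℕ)
    (hm : 1 ≤ m) (hr : r < k)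
    (p : Polynomial F) (hmonic : p.Monic) (hirr : Irreducible p)
    (hdeg : p.natDegree = k)
    (U V : Matrix (Fin k) (Fin m × Fin k) F)
    (hU : IsSpreadMat (companionMatrix (k := k) p) U)
    (hV : IsSpreadMat (companionMatrix (k := k) p) V)
    (A A' : Matrix (Fin k) (Fin k) F) (hA : A.rank = k - r) (hA' : A'.rank = k - r)
    (S : Finset (Fin m × Fin k)) (hS : S.card ≤ k - r - 1)
    (hagree : ∀ col ∉ S, ∀ row : Fin k, (A * U) row col = (A' * V) row col) :
    rowSpace U = rowSpace V := by
  classical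
  obtain ⟨i, B, hB0, hB1, hBP, rfl⟩ := hU
  obtain ⟨i', C, hC0, hC1, hCP, rfl⟩ := hV
  have hP := aeval_companionMatrix p hmonic hdeg (by omega : 0 < k)
  set P := companionMatrix (k := k) p
  have hBmem : ∀ j, B j ∈ (aeval (R := F) P).range := fun j => by
    rcases lt_trichotomy j i with h | h | h
    · rw [hB0 j h]; exact zero_mem _
    · rw [h, hB1]; exact one_mem _
    · exact mem_range_aeval_of_mem_matAlg (hBP j h)
  have hCmem : ∀ j, C j ∈ (aeval (R := F) P).range := fun j => by
    rcases lt_trichotomy j i' with h | h | h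
    · rw [hC0 j h]; exact zero_mem _
    · rw [h, hC1]; exact one_mem _
    · exact mem_range_aeval_of_mem_matAlg (hCP j h)
  -- `s j` is the number of erased columns in block `j`.
  let s : Fin m → ℕ := fun j => (S.filter fun c => c.1 = j).card
  have hrank : ∀ j, (A * B j - A' * C j).rank ≤ s j := fun j => by
    refine (rank_le_card_of_cols _ ((S.filter fun c => c.1 = j).image Prod.snd) ?_).trans
      Finset.card_image_le
    intro c hc row
    have hcS : (j, c) ∉ S := fun h =>
      hc (Finset.mem_image.2 ⟨(j, c), Finset.mem_filter.2 ⟨h, rfl⟩, rfl⟩)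
    have h := hagree (j, c) hcS row
    simp only [Matrix.mul_apply, Matrix.of_apply] at h
    rw [Matrix.sub_apply, Matrix.mul_apply, Matrix.mul_apply, h, sub_self]
  have hs1 : ∀ j, s j ≤ S.card := fun j => Finset.card_filter_le _ _
  have hs2 : ∀ j l, j ≠ l → s j + s l ≤ S.card := fun j l hjl => by
    rw [← Finset.card_union_of_disjoint]
    · exact Finset.card_le_card
        (Finset.union_subset (Finset.filter_subset _ _) (Finset.filter_subset _ _))
    · rw [Finset.disjoint_filter]
      rintro c - rfl
      exact hjl
  have hii : i = i' := by
    rcases lt_trichotomy i i' with h | h | h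
    · have h1 := hrank i
      rw [hB1, hC0 i h, mul_one, mul_zero, sub_zero] at h1
      have := hs1 i
      omega
    · exact h
    · have h1 := hrank i'
      rw [hC1, hB0 i' h, mul_one, mul_zero, zero_sub] at h1
      have h2 := rank_sub_le_add 0 (-A')
      rw [zero_sub, neg_neg, Matrix.rank_zero, zero_add] at h2
      have := hs1 i'
      omega
  subst hii
  have hBC : ∀ j, B j = C j := fun j => by
    by_cases hji : j = i
    · rw [hji, hB1, hC1]
    by_contra hne
    have hunit := isUnit_of_mem_range_aeval p hirr hP (sub_mem (hBmem j) (hCmem j))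
      (sub_ne_zero.2 hne)
    have h1 : (A * (B j - C j)).rank = A.rank :=
      Matrix.rank_mul_eq_left_of_isUnit_det _ _ ((Matrix.isUnit_iff_isUnit_det _).1 hunit)
    have h2 : A * (B j - C j) = (A * B j - A' * C j) - (A - A') * C j := by noncomm_ring
    have h3 := rank_sub_le_add (A * B j - A' * C j) ((A - A') * C j)
    have h4 := Matrix.rank_mul_le_left (A - A') (C j)
    have h5 := hrank i
    rw [hB1, hC1, mul_one, mul_one] at h5
    have h6 := hrank j
    have h7 := hs2 j i hji
    rw [← h2, h1] at h3
    omega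
  rw [funext hBC]

end
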